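/- Let a, r, δ, ζ, Υ, λ, α > 0 be real, let f_{a,r}(y) = r^a y^{a−1} e^{−r y}/Γ(a) for y ≥ 0 (and 0 for y < 0) be the Gamma probability density with shape a and rate r, let γ(c, z) = ∫_0^z t^{c−1} e^{−t} dt be the lower incomplete gamma function, and for ρ > 0 set c(ρ) = (1/ζ)·√(Υ·λ/(ρ·α)). Then lim_{ρ→∞} [∫_0^∞ f_{a,r}(y) · (γ(δ, c(ρ)·√y)/Γ(δ)) dy] / [(Γ(a + δ/2)/(δ·Γ(δ)·Γ(a)·r^{δ/2})) · c(ρ)^δ] = 1. -/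

import Mathlib

open Filter

/-- The Gamma probability density with shape `a` and rate `r`:
`f_{a,r}(x) = r^a x^(a-1) e^(-r x) / Γ(a)` for `x ≥ 0`, and `0` for `x < 0`. -/
noncomputable def gammaPdf (a r x : ℝ) : ℝ :=
  if 0 ≤ x then r ^ a * x ^ (a - 1) * Real.exp (-(r * x)) / Real.Gamma a else 0

/-- The lower incomplete gamma function `γ(c, z) = ∫_0^z t^(c-1) e^(-t) dt`. -/
noncomputable def lowerIncGamma (c z : ℝ) : ℝ :=
  ∫ t in (0 : ℝ)..z, t ^ (c - 1) * Real.exp (-t)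

theorem intervalIntegrable_rpow_mul_exp_neg {c : ℝ} (hc : 0 < c) (u v : ℝ) :
    IntervalIntegrable (fun t : ℝ => t ^ (c - 1) * Real.exp (-t)) MeasureTheory.volume u v :=
  (intervalIntegral.intervalIntegrable_rpow' (by linarith)).mul_continuousOn
    (Real.continuous_exp.comp continuous_neg).continuousOn

theorem continuous_lowerIncGamma {c : ℝ} (hc : 0 < c) : Continuous (lowerIncGamma c) :=
  intervalIntegral.continuous_primitive (intervalIntegrable_rpow_mul_exp_neg hc) 0

theorem integral_rpow_sub_one {c : ℝ} (hc : 0 < c) (z : ℝ) :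
    ∫ t in (0 : ℝ)..z, t ^ (c - 1) = z ^ c / c := by
  rw [integral_rpow (Or.inl (by linarith)), sub_add_cancel, Real.zero_rpow hc.ne', sub_zero]

theorem lowerIncGamma_le {c z : ℝ} (hc : 0 < c) (hz : 0 ≤ z) :
    lowerIncGamma c z ≤ z ^ c / c := by
  rw [← integral_rpow_sub_one hc]
  refine intervalIntegral.integral_mono_on hz (intervalIntegrable_rpow_mul_exp_neg hc 0 z)
    (intervalIntegral.intervalIntegrable_rpow' (by linarith)) fun t ht => ?_
  exact mul_le_of_le_one_right (Real.rpow_nonneg ht.1 _) (Real.exp_le_one_iff.2 (by linarith [ht.1]))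

theorem exp_neg_mul_le_lowerIncGamma {c z : ℝ} (hc : 0 < c) (hz : 0 ≤ z) :
    Real.exp (-z) * (z ^ c / c) ≤ lowerIncGamma c z := by
  rw [← integral_rpow_sub_one hc, mul_comm, ← intervalIntegral.integral_mul_const]
  refine intervalIntegral.integral_mono_on hz
    ((intervalIntegral.intervalIntegrable_rpow' (by linarith)).mul_const _)
    (intervalIntegrable_rpow_mul_exp_neg hc 0 z) fun t ht => ?_
  exact mul_le_mul_of_nonneg_left (Real.exp_le_exp.2 (by linarith [ht.2]))
    (Real.rpow_nonneg ht.1 _)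

theorem lowerIncGamma_nonneg {c z : ℝ} (hc : 0 < c) (hz : 0 ≤ z) : 0 ≤ lowerIncGamma c z :=
  le_trans (by positivity) (exp_neg_mul_le_lowerIncGamma hc hz)

theorem gammaPdf_nonneg {a r : ℝ} (ha : 0 < a) (hr : 0 < r) (y : ℝ) : 0 ≤ gammaPdf a r y := by
  have := Real.Gamma_pos_of_pos ha
  unfold gammaPdf
  split_ifs <;> positivity

theorem measurable_gammaPdf (a r : ℝ) : Measurable (gammaPdf a r) :=
  Measurable.ite measurableSet_Ici (by fun_prop) measurable_const

/-- The moment of order `s` of the Gamma distribution. -/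
theorem integral_gammaPdf_mul_rpow {a r s : ℝ} (ha : 0 < a) (hr : 0 < r) (hs : 0 ≤ s) :
    ∫ y in Set.Ioi (0 : ℝ), gammaPdf a r y * y ^ s
      = Real.Gamma (a + s) / (Real.Gamma a * r ^ s) := by
  have h : Set.EqOn (fun y => gammaPdf a r y * y ^ s)
      (fun y => r ^ a / Real.Gamma a * (y ^ (a + s - 1) * Real.exp (-(r * y))))
      (Set.Ioi (0 : ℝ)) := by
    intro y (hy : 0 < y)
    simp only [gammaPdf, if_pos hy.le]
    rw [show a + s - 1 = (a - 1) + s by ring, Real.rpow_add hy]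
    ring
  rw [MeasureTheory.setIntegral_congr_fun measurableSet_Ioi h, MeasureTheory.integral_const_mul,
    Real.integral_rpow_mul_exp_neg_mul_Ioi (by linarith) hr, one_div, Real.inv_rpow hr.le,
    Real.rpow_add hr]
  have := (Real.Gamma_pos_of_pos ha).ne'
  field_simp

theorem integrableOn_gammaPdf_mul_rpow {a r s : ℝ} (ha : 0 < a) (hr : 0 < r) (hs : 0 ≤ s) :
    MeasureTheory.IntegrableOn (fun y => gammaPdf a r y * y ^ s) (Set.Ioi (0 : ℝ)) := by
  refine .of_integral_ne_zero ?_
  rw [integral_gammaPdf_mul_rpow ha hr hs]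
  have := Real.Gamma_pos_of_pos ha
  have := Real.Gamma_pos_of_pos (show 0 < a + s by linarith)
  positivity

theorem mul_sqrt_rpow {c y : ℝ} (hc : 0 ≤ c) (hy : 0 ≤ y) (δ : ℝ) :
    (c * Real.sqrt y) ^ δ = c ^ δ * y ^ (δ / 2) := by
  rw [Real.mul_rpow hc (Real.sqrt_nonneg y), Real.sqrt_eq_rpow, ← Real.rpow_mul hy,
    one_div_mul_eq_div]

theorem tendsto_lowerIncGamma_mul_sqrt_div {δ y : ℝ} (hδ : 0 < δ) (hy : 0 ≤ y) :
    Tendsto (fun c => lowerIncGamma δ (c * Real.sqrt y) / c ^ δ) (nhdsWithin 0 (Set.Ioi 0))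
      (nhds (y ^ (δ / 2) / δ)) := by
  have hlow : Tendsto (fun c => Real.exp (-(c * Real.sqrt y)) * (y ^ (δ / 2) / δ))
      (nhdsWithin 0 (Set.Ioi 0)) (nhds (y ^ (δ / 2) / δ)) := by
    have hcont : Continuous fun c => Real.exp (-(c * Real.sqrt y)) * (y ^ (δ / 2) / δ) := by
      fun_prop
    simpa using (hcont.tendsto 0).mono_left nhdsWithin_le_nhds
  refine tendsto_of_tendsto_of_tendsto_of_le_of_le' hlow tendsto_const_nhds ?_ ?_
  all_goals
    filter_upwards [self_mem_nhdsWithin] with c (hc : 0 < c)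
    have hz : 0 ≤ c * Real.sqrt y := by positivity
    have hcδ : 0 < c ^ δ := by positivity
  · rw [le_div_iff₀ hcδ]
    convert! exp_neg_mul_le_lowerIncGamma hδ hz using 1
    rw [mul_sqrt_rpow hc.le hy]
    ring
  · rw [div_le_iff₀ hcδ]
    convert! lowerIncGamma_le hδ hz using 1
    rw [mul_sqrt_rpow hc.le hy]
    ring

theorem tendsto_integral_gammaPdf_mul_lowerIncGamma_div {a r δ : ℝ}
    (ha : 0 < a) (hr : 0 < r) (hδ : 0 < δ) :
    Tendsto (fun c => ∫ y in Set.Ioi (0 : ℝ),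
        gammaPdf a r y * (lowerIncGamma δ (c * Real.sqrt y) / c ^ δ))
      (nhdsWithin 0 (Set.Ioi 0))
      (nhds (Real.Gamma (a + δ / 2) / (Real.Gamma a * r ^ (δ / 2)) / δ)) := by
  rw [← integral_gammaPdf_mul_rpow ha hr (by positivity), ← MeasureTheory.integral_div]
  refine MeasureTheory.tendsto_integral_filter_of_dominated_convergence
    (fun y => gammaPdf a r y * y ^ (δ / 2) / δ) ?_ ?_
    ((integrableOn_gammaPdf_mul_rpow ha hr (by positivity)).div_const δ) ?_
  · refine Eventually.of_forall fun c => Measurable.aestronglyMeasurable ?_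
    have := (continuous_lowerIncGamma hδ).measurable
    have := measurable_gammaPdf a r
    fun_prop
  · filter_upwards [self_mem_nhdsWithin] with c (hc : 0 < c)
    filter_upwards [MeasureTheory.ae_restrict_mem measurableSet_Ioi] with y (hy : 0 < y)
    have hz : 0 ≤ c * Real.sqrt y := by positivity
    have hcδ : 0 < c ^ δ := by positivity
    have hpdf := gammaPdf_nonneg ha hr y
    have hinc := lowerIncGamma_nonneg hδ hz
    rw [Real.norm_of_nonneg (by positivity), mul_div_assoc]
    refine mul_le_mul_of_nonneg_left ?_ hpdf
    rw [div_le_iff₀ hcδ]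
    convert! lowerIncGamma_le hδ hz using 1
    rw [mul_sqrt_rpow hc.le hy.le]
    ring
  · filter_upwards [MeasureTheory.ae_restrict_mem measurableSet_Ioi] with y (hy : 0 < y)
    simp only [mul_div_assoc]
    exact (tendsto_lowerIncGamma_mul_sqrt_div hδ hy.le).const_mul _

theorem tendsto_scaled_sqrt_div {ζ κ α : ℝ} (hζ : 0 < ζ) (hκ : 0 < κ) (hα : 0 < α) :
    Tendsto (fun ρ : ℝ => (1 / ζ) * Real.sqrt (κ / (ρ * α))) atTop
      (nhdsWithin 0 (Set.Ioi 0)) := by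
  refine tendsto_nhdsWithin_iff.2 ⟨?_, ?_⟩
  · have h : Tendsto (fun ρ : ℝ => κ / (ρ * α)) atTop (nhds 0) :=
      (tendsto_id.atTop_mul_const hα).const_div_atTop κ
    simpa using (h.sqrt).const_mul (1 / ζ)
  · filter_upwards [eventually_gt_atTop 0] with ρ hρ
    simp only [Set.mem_Ioi]
    positivity

/-- Lemma 3 as an exact asymptotic equivalence: with `c(ρ) = (1/ζ)√(Υλ/(ρα))`, the term
`ξ₁(ρ) = ∫_0^∞ f_{a,r}(y) γ(δ, c(ρ)√y)/Γ(δ) dy` is asymptotically equal, as `ρ → ∞`, to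
`ξ₁^∞(ρ) = (Γ(a + δ/2)/(δ Γ(δ) Γ(a) r^(δ/2))) c(ρ)^δ` (Eq. (11)). -/
theorem xi1_asymptotic (a r δ ζ Υ lam α : ℝ)
    (ha : 0 < a) (hr : 0 < r) (hδ : 0 < δ) (hζ : 0 < ζ)
    (hΥ : 0 < Υ) (hlam : 0 < lam) (hα : 0 < α) :
    Tendsto (fun ρ : ℝ =>
        (∫ y in Set.Ioi (0 : ℝ), gammaPdf a r y
            * (lowerIncGamma δ (((1 / ζ) * Real.sqrt (Υ * lam / (ρ * α))) * Real.sqrt y)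
                / Real.Gamma δ))
          / ((Real.Gamma (a + δ / 2) / (δ * Real.Gamma δ * Real.Gamma a * r ^ (δ / 2)))
              * ((1 / ζ) * Real.sqrt (Υ * lam / (ρ * α))) ^ δ))
      atTop (nhds 1) := by
  have hΓa := Real.Gamma_pos_of_pos ha
  have hΓδ := Real.Gamma_pos_of_pos hδ
  have hΓ := Real.Gamma_pos_of_pos (show 0 < a + δ / 2 by positivity)
  have hL : 0 < Real.Gamma (a + δ / 2) / (Real.Gamma a * r ^ (δ / 2)) / δ := by positivity
  have hlim := ((tendsto_integral_gammaPdf_mul_lowerIncGamma_div ha hr hδ).comp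
    (tendsto_scaled_sqrt_div hζ (mul_pos hΥ hlam) hα)).div_const
      (Real.Gamma (a + δ / 2) / (Real.Gamma a * r ^ (δ / 2)) / δ)
  rw [div_self hL.ne'] at hlim
  refine hlim.congr fun ρ => ?_
  simp only [Function.comp_apply, ← mul_div_assoc, MeasureTheory.integral_div]
  field_simp
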